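/- Let X be a proper metric space and let G be a finite group acting on X by isometries. Then the orbit space G\X, equipped with the Hausdorff distance between orbits, has the same asymptotic dimension as X: asdim(G\X) = asdim(X). -/

import Mathlib

open Metric Bornology Function Set

/-- A map between metric spaces is (coarsely) proper if preimages of bounded
sets are bounded. -/
def MetricallyProper {X Y : Type*} [MetricSpace X] [MetricSpace Y] (f : X → Y) : Prop :=
  ∀ B : Set Y, IsBounded B → IsBounded (f ⁻¹' B)

/-- A coarse map: proper, and uniformly bornologous. -/
def CoarseMap {X Y : Type*} [MetricSpace X] [MetricSpace Y] (f : X → Y) : Prop :=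
  MetricallyProper f ∧
    ∀ R > (0:ℝ), ∃ S > (0:ℝ), ∀ x x' : X, dist x x' ≤ R → dist (f x) (f x') ≤ S

/-- Coarsely surjective map. -/
def CoarselySurjective {X Y : Type*} [MetricSpace X] [MetricSpace Y] (f : X → Y) : Prop :=
  ∃ R > (0:ℝ), ∀ y : Y, ∃ x : X, dist y (f x) ≤ R

/-- `f` is coarsely `n`-to-1. -/
def CoarselyNTo1 {X Y : Type*} [MetricSpace X] [MetricSpace Y] (f : X → Y) (n : ℕ) : Prop :=
  ∀ R > (0:ℝ), ∃ S > (0:ℝ), ∀ A : Set Y, (∀ y ∈ A, ∀ y' ∈ A, dist y y' ≤ R) →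
    ∃ V : Fin n → Set X, (∀ i, ∀ x ∈ V i, ∀ x' ∈ V i, dist x x' ≤ S) ∧ f ⁻¹' A ⊆ ⋃ i, V i

/-- `f` is coarsely finite-to-1. -/
def CoarselyFiniteTo1 {X Y : Type*} [MetricSpace X] [MetricSpace Y] (f : X → Y) : Prop :=
  ∀ R > (0:ℝ), ∃ S > (0:ℝ), ∃ m : ℕ, ∀ A : Set Y, (∀ y ∈ A, ∀ y' ∈ A, dist y y' ≤ R) →
    ∃ V : Fin m → Set X, (∀ i, ∀ x ∈ V i, ∀ x' ∈ V i, dist x x' ≤ S) ∧ f ⁻¹' A ⊆ ⋃ i, V i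

/-- Two maps are close. -/
def Close {X Y : Type*} [MetricSpace X] [MetricSpace Y] (f g : X → Y) : Prop :=
  ∃ R > (0:ℝ), ∀ x : X, dist (f x) (g x) ≤ R

/-- `f` is a coarse equivalence. -/
def CoarseEquivalence {X Y : Type*} [MetricSpace X] [MetricSpace Y] (f : X → Y) : Prop :=
  CoarseMap f ∧ ∃ g : Y → X, CoarseMap g ∧ Close (f ∘ g) id ∧ Close (g ∘ f) id

/-- `X` and `Y` are coarsely equivalent. -/
def CoarselyEquivalent (X Y : Type*) [MetricSpace X] [MetricSpace Y] : Prop :=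
  ∃ f : X → Y, CoarseEquivalence f

/-- A family of subsets is uniformly bounded. -/
def UnifBounded {X : Type*} [MetricSpace X] (𝒰 : Set (Set X)) : Prop :=
  ∃ S : ℝ, ∀ U ∈ 𝒰, ∀ x ∈ U, ∀ y ∈ U, dist x y ≤ S

/-- A family of subsets is `R`-disjoint: distinct members lie at distance `> R`. -/
def RDisjointFam {X : Type*} [MetricSpace X] (𝒰 : Set (Set X)) (R : ℝ) : Prop :=
  ∀ U ∈ 𝒰, ∀ V ∈ 𝒰, U ≠ V → ∀ x ∈ U, ∀ y ∈ V, R < dist x y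

/-- `asdim X ≤ n`. -/
def ASDimLE (X : Type*) [MetricSpace X] (n : ℕ) : Prop :=
  ∀ R > (0:ℝ), ∃ 𝒰 : Fin (n + 1) → Set (Set X),
    (∀ i, UnifBounded (𝒰 i)) ∧ (∀ i, RDisjointFam (𝒰 i) R) ∧
      ∀ x : X, ∃ i, ∃ U ∈ 𝒰 i, x ∈ U

/-- The asymptotic dimension of `X`, valued in `ℕ∞`. -/
noncomputable def asdim (X : Type*) [MetricSpace X] : ℕ∞ :=
  sInf {n : ℕ∞ | ∃ m : ℕ, n = (m : ℕ∞) ∧ ASDimLE X m}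

/-- TI-increasing functions `[0,∞) → [0,∞)`. -/
def TIIncreasing (ρ : NNReal → NNReal) : Prop :=
  Monotone ρ ∧ Filter.Tendsto ρ Filter.atTop Filter.atTop

/-- The variable-radius neighborhood `N(A, ρ)` with respect to a basepoint `x₀`. -/
def GrowNbhd {X : Type*} [MetricSpace X] (x₀ : X) (A : Set X) (ρ : NNReal → NNReal) : Set X :=
  {x' | ∃ x ∈ A, nndist x' x ≤ ρ (nndist x x₀)}

/-- `f` is coarsely open (with respect to basepoints `x₀`, `y₀`). -/
def CoarselyOpen {X Y : Type*} [MetricSpace X] [MetricSpace Y] (f : X → Y)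
    (x₀ : X) (y₀ : Y) : Prop :=
  ∀ A : Set X, ¬ IsBounded A → ∀ ρ : NNReal → NNReal, TIIncreasing ρ →
    ∃ ρ' : NNReal → NNReal, TIIncreasing ρ' ∧
      GrowNbhd y₀ (f '' A) ρ' ⊆ f '' GrowNbhd x₀ A ρ

/-- `N(A, R)`, the closed `R`-neighborhood of `A`. -/
def NbhdR {X : Type*} [MetricSpace X] (A : Set X) (R : ℝ) : Set X :=
  {x | ∃ a ∈ A, dist x a ≤ R}

/-- A finite collection of subsets is gradually disjoint. -/
def GraduallyDisjoint {X : Type*} [MetricSpace X] {k : ℕ} (A : Fin k → Set X) : Prop :=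
  ∀ R > (0:ℝ), ∃ B : Set X, IsBounded B ∧
    ∀ i j, i ≠ j → Disjoint (NbhdR (A i) R \ B) (NbhdR (A j) R \ B)

/-- A finite collection of subsets diverges. -/
def Diverges {X : Type*} [MetricSpace X] {k : ℕ} (A : Fin k → Set X) : Prop :=
  ∀ R > (0:ℝ), IsBounded (⋂ i, NbhdR (A i) R)

/-- A countable collection of subsets is gradually disjoint: every finite
subcollection is. -/
def GraduallyDisjointSeq {X : Type*} [MetricSpace X] (A : ℕ → Set X) : Prop :=
  ∀ s : Finset ℕ, ∀ R > (0:ℝ), ∃ B : Set X, IsBounded B ∧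
    ∀ i ∈ s, ∀ j ∈ s, i ≠ j → Disjoint (NbhdR (A i) R \ B) (NbhdR (A j) R \ B)

/-- A countable collection of subsets diverges: some finite subcollection diverges. -/
def DivergesSeq {X : Type*} [MetricSpace X] (A : ℕ → Set X) : Prop :=
  ∃ s : Finset ℕ, ∀ R > (0:ℝ), IsBounded (⋂ i ∈ s, NbhdR (A i) R)

/-- A complex-valued function on a metric space is slowly oscillating. -/
def SlowlyOscillating {X : Type*} [MetricSpace X] (φ : X → ℂ) : Prop :=
  ∀ R > (0:ℝ), ∀ ε > (0:ℝ), ∃ A : Set X, IsBounded A ∧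
    ∀ x : X, ∀ p ∈ closedBall x R \ A, ∀ p' ∈ closedBall x R \ A, dist (φ p) (φ p') ≤ ε

/-!
The quotient map `q` is 1-Lipschitz and the preimage of a bounded set is covered by `|G|` balls of
comparable radius, so the preimages of the sets of a cover of the quotient have bounded chain
components; this gives `asdim X ≤ asdim (G\X)`.

For the converse, a cheap pigeonhole argument first bounds `asdim (G\X)` by `|G| (n + 1)`. The
quotient is therefore a finite union of sets with bounded chain components, and each of these admits
a section of `q` that varies boundedly along components. Over points `q x` at which no group element
moves `x` by a distance between `s` and a much larger `s + c`, such a section distorts small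
distances by at most `s`, hence pulls back covers of `X` by `n + 1` families to covers of the
quotient. The remaining points lose one element moving `x` far when `s` is replaced by `s + c`, and
induction on the number of these elements together with the union theorem for asymptotic dimension
finishes the proof.
-/

open scoped NNReal

section Chains

variable {Y Z : Type*} [PseudoMetricSpace Y] [PseudoMetricSpace Z]
  {A B : Set Y} {r s D E : ℝ≥0} {x y z : Y}

/-- `ChainIn A r x y`: the points `x` and `y` are joined by finitely many jumps of length at most
`r` between points of `A`. The empty chain is allowed at every point, whether in `A` or not. -/
def ChainIn (A : Set Y) (r : ℝ≥0) : Y → Y → Prop :=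
  Relation.ReflTransGen fun a b => a ∈ A ∧ b ∈ A ∧ dist a b ≤ r

namespace ChainIn

theorem refl (x : Y) : ChainIn A r x x := Relation.ReflTransGen.refl

theorem single (hx : x ∈ A) (hy : y ∈ A) (hxy : dist x y ≤ r) : ChainIn A r x y :=
  Relation.ReflTransGen.single ⟨hx, hy, hxy⟩

theorem trans (hxy : ChainIn A r x y) (hyz : ChainIn A r y z) : ChainIn A r x z :=
  Relation.ReflTransGen.trans hxy hyz

theorem symm (h : ChainIn A r x y) : ChainIn A r y x := by
  induction h with
  | refl => exact refl x
  | tail _ hstep ih =>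
    exact (single hstep.2.1 hstep.1 (by simpa only [dist_comm] using hstep.2.2)).trans ih

theorem eq_or_mem (h : ChainIn A r x y) : x = y ∨ x ∈ A ∧ y ∈ A := by
  induction h with
  | refl => exact .inl rfl
  | tail _ hstep ih =>
    rcases ih with rfl | ⟨hx, -⟩
    · exact .inr ⟨hstep.1, hstep.2.1⟩
    · exact .inr ⟨hx, hstep.2.1⟩

theorem mem (h : ChainIn A r x y) (hx : x ∈ A) : y ∈ A := by
  rcases h.eq_or_mem with rfl | ⟨-, hy⟩
  exacts [hx, hy]

theorem mono (h : ChainIn A r x y) (hAB : A ⊆ B) (hrs : r ≤ s) : ChainIn B s x y :=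
  Relation.ReflTransGen.mono
    (fun _ _ hab => ⟨hAB hab.1, hAB hab.2.1, hab.2.2.trans (NNReal.coe_le_coe.2 hrs)⟩) _ _ h

theorem map {f : Y → Z} {C : Set Z} (h : ChainIn A r x y) (hfAC : MapsTo f A C)
    (hf : ∀ a ∈ A, ∀ b ∈ A, dist a b ≤ r → dist (f a) (f b) ≤ s) :
    ChainIn C s (f x) (f y) :=
  Relation.ReflTransGen.lift f
    (fun a b hab => ⟨hfAC hab.1, hfAC hab.2.1, hf a hab.1 b hab.2.1 hab.2.2⟩) _ _ h

theorem of_forall_mem (h : ChainIn A r x y) (hB : ∀ z ∈ A, ChainIn A r x z → z ∈ B) :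
    ChainIn B r x y := by
  induction h with
  | refl => exact refl x
  | tail hchain hstep ih =>
    exact ih.trans (single (hB _ hstep.1 hchain)
      (hB _ hstep.2.1 (hchain.trans (single hstep.1 hstep.2.1 hstep.2.2))) hstep.2.2)

end ChainIn

/-- `ChainBounded A r D`: the `r`-chain components of `A` have diameter at most `D`, i.e. `A` has
dimension zero at scale `r`, with bound `D`. -/
def ChainBounded (A : Set Y) (r D : ℝ≥0) : Prop :=
  ∀ ⦃x y⦄, ChainIn A r x y → dist x y ≤ D

namespace ChainBounded

theorem mono (h : ChainBounded B s D) (hAB : A ⊆ B) (hrs : r ≤ s) : ChainBounded A r D :=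
  fun _ _ hxy => h (hxy.mono hAB hrs)

theorem of_forall_dist_le (h : ∀ x ∈ A, ∀ y ∈ A, dist x y ≤ D) : ChainBounded A r D := by
  intro x y hxy
  rcases hxy.eq_or_mem with rfl | ⟨hx, hy⟩
  · simp
  · exact h x hx y hy

theorem of_forall_exists_dist_le {δ : ℝ≥0} (hA : ChainBounded A (r + 2 * δ) D)
    (hBA : ∀ b ∈ B, ∃ a ∈ A, dist b a ≤ δ) : ChainBounded B r (D + 2 * δ) := by
  intro x y hxy
  rcases hxy.eq_or_mem with rfl | ⟨hx, hy⟩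
  · rw [dist_self]; positivity
  choose! near near_mem dist_near using hBA
  have hchain : ChainIn A (r + 2 * δ) (near x) (near y) :=
    hxy.map near_mem fun a ha b hb hab => by
      have := dist_triangle4_left a (near a) (near b) b
      have := dist_triangle4 (near a) a b (near b)
      push_cast
      linarith [dist_near a ha, dist_near b hb, dist_comm a (near a)]
  have := dist_triangle4 x (near x) (near y) y
  push_cast
  linarith [hA hchain, dist_near x hx, dist_near y hy, dist_comm y (near y)]

theorem union (hA : ChainBounded A r D) (hB : ChainBounded B (r + 2 * (D + r)) E) :
    ChainBounded (A ∪ B) r (E + 2 * (D + r)) := by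
  -- Chains in `A ∪ B` cannot leave the union `M` of `B` and the components of `A` adjacent to `B`.
  let M : Set Y := {p | ∃ a, ChainIn A r p a ∧ ∃ b ∈ B, dist a b ≤ r}
  have hBM : B ⊆ M := fun b hb => ⟨b, .refl b, b, hb, by simp⟩
  have hM_saturated : ∀ {p p'}, ChainIn (A ∪ B) r p p' → p ∈ M → p' ∈ M := by
    intro p p' hpp' hp
    induction hpp' with
    | refl => exact hp
    | @tail c d _ hstep ih =>
      obtain ⟨hc, hd | hd, hcd⟩ := hstep
      · rw [dist_comm] at hcd
        rcases hc with hc | hc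
        · obtain ⟨a, hca, hab⟩ := ih
          exact ⟨a, (ChainIn.single hd hc hcd).trans hca, hab⟩
        · exact ⟨d, .refl d, c, hc, hcd⟩
      · exact hBM hd
  have hM : ChainBounded M r (E + 2 * (D + r)) :=
    hB.of_forall_exists_dist_le fun p ⟨a, hpa, b, hb, hab⟩ => ⟨b, hb, by
      push_cast
      linarith [dist_triangle p a b, hA hpa]⟩
  intro x y hxy
  by_cases hx : x ∈ M
  · exact hM (hxy.of_forall_mem fun z _ hxz => hM_saturated hxz hx)
  · have hxyA : ChainIn A r x y := hxy.of_forall_mem fun z hz hxz =>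
      hz.resolve_right fun hzB => hx (hM_saturated hxz.symm (hBM hzB))
    refine (hA hxyA).trans ?_
    push_cast
    linarith [E.coe_nonneg, D.coe_nonneg, r.coe_nonneg]

end ChainBounded

/-- `DimLEAtScale P n r D`: the set `P` has dimension at most `n` at scale `r` with bound `D`, i.e.
it is covered by `n + 1` sets whose `r`-chain components have diameter at most `D`. -/
def DimLEAtScale (P : Set Y) (n : ℕ) (r D : ℝ≥0) : Prop :=
  ∃ A : Fin (n + 1) → Set Y, P ⊆ ⋃ i, A i ∧ ∀ i, ChainBounded (A i) r D

theorem dimLEAtScale_zero_iff : DimLEAtScale A 0 r D ↔ ChainBounded A r D := by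
  refine ⟨?_, fun hA => ⟨fun _ => A, subset_iUnion (fun _ : Fin 1 => A) 0, fun _ => hA⟩⟩
  rintro ⟨C, hAC, hC⟩
  exact (hC 0).mono (hAC.trans (iUnion_subset fun i => (congrArg C (Fin.fin_one_eq_zero i)).subset))
    le_rfl

namespace DimLEAtScale

variable {P P' : Set Y} {n : ℕ}

theorem empty : DimLEAtScale (∅ : Set Y) n r D :=
  ⟨fun _ => ∅, empty_subset _, fun _ => .of_forall_dist_le (by simp)⟩

theorem comap {f : Y → Z} {R : Set Z} (h : DimLEAtScale R n s D) (hfPR : MapsTo f P R)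
    (hf : ∀ a ∈ P, ∀ b ∈ P, dist a b ≤ r → dist (f a) (f b) ≤ s)
    (hf_expand : ∀ a b, dist a b ≤ dist (f a) (f b)) : DimLEAtScale P n r D := by
  obtain ⟨A, hRA, hA⟩ := h
  refine ⟨fun i => P ∩ f ⁻¹' A i, fun p hp => ?_, fun i x y hxy => ?_⟩
  · obtain ⟨i, hi⟩ := mem_iUnion.1 (hRA (hfPR hp))
    exact mem_iUnion.2 ⟨i, hp, hi⟩
  · exact (hf_expand x y).trans
      (hA i (hxy.map (fun _ ha => ha.2) fun a ha b hb => hf a ha.1 b hb.1))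

theorem mono (h : DimLEAtScale P' n s D) (hP : P ⊆ P') (hrs : r ≤ s) : DimLEAtScale P n r D :=
  h.comap (f := id) hP (fun _ _ _ _ hab => hab.trans (NNReal.coe_le_coe.2 hrs)) fun _ _ => le_rfl

theorem union (hP : DimLEAtScale P n r D) (hP' : DimLEAtScale P' n (r + 2 * (D + r)) E) :
    DimLEAtScale (P ∪ P') n r (E + 2 * (D + r)) := by
  obtain ⟨A, hPA, hA⟩ := hP
  obtain ⟨B, hPB, hB⟩ := hP'
  refine ⟨fun i => A i ∪ B i, ?_, fun i => (hA i).union (hB i)⟩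
  rw [iUnion_union_distrib]
  exact union_subset_union hPA hPB

/-- The largest scale `L` at which the pieces have to be controlled depends only on their number
and on the control function `D`, so the pieces may be chosen after `L`. -/
theorem exists_iUnion (ι : Type*) [Finite ι] (n : ℕ) (D : ℝ≥0 → ℝ≥0) (r : ℝ≥0) :
    ∃ F L : ℝ≥0, ∀ P : ι → Set Y, (∀ k, ∀ t ≤ L, DimLEAtScale (P k) n t (D t)) →
      DimLEAtScale (⋃ k, P k) n r F := by
  induction ι using Finite.induction_empty_option with
  | of_equiv e ih =>
    obtain ⟨F, L, h⟩ := ih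
    exact ⟨F, L, fun P hP => e.surjective.iUnion_comp P ▸ h (P ∘ e) fun k => hP (e k)⟩
  | h_empty => exact ⟨0, 0, fun P _ => by simpa using empty⟩
  | h_option ih =>
    obtain ⟨F, L, h⟩ := ih
    refine ⟨D (r + 2 * (F + r)) + 2 * (F + r), max L (r + 2 * (F + r)), fun P hP => ?_⟩
    rw [iUnion_option, union_comm]
    exact (h _ fun k t ht => hP (some k) t (ht.trans (le_max_left _ _))).union
      (hP none _ (le_max_right _ _))

end DimLEAtScale

end Chains

section AsymptoticDimension

variable {X Y : Type*} [MetricSpace X] [MetricSpace Y]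

theorem ChainBounded.sUnion {𝒰 : Set (Set Y)} {r D : ℝ≥0}
    (hbdd : ∀ U ∈ 𝒰, ∀ x ∈ U, ∀ y ∈ U, dist x y ≤ D) (hdisj : RDisjointFam 𝒰 r) :
    ChainBounded (⋃₀ 𝒰) r D := by
  intro x y hxy
  rcases hxy.eq_or_mem with rfl | ⟨⟨U, hU, hxU⟩, -⟩
  · simp
  have hyU : y ∈ U := by
    induction hxy with
    | refl => exact hxU
    | tail _ hstep ih =>
      obtain ⟨-, ⟨V, hV, hV_mem⟩, hdist⟩ := hstep
      by_contra hU_mem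
      exact (hdisj U hU V hV (by rintro rfl; exact hU_mem hV_mem) _ ih _ hV_mem).not_ge hdist
  exact hbdd U hU x hxU y hyU

/-- The `r`-chain components of `A`: the decomposition of `A` into `r`-disjoint sets used to pass
from chains to the families in the definition of asymptotic dimension. -/
def chainComponents (A : Set Y) (r : ℝ≥0) : Set (Set Y) :=
  (fun x => {y | ChainIn A r x y}) '' A

theorem rDisjointFam_chainComponents (A : Set Y) (r : ℝ≥0) :
    RDisjointFam (chainComponents A r) r := by
  rintro _ ⟨x, hx, rfl⟩ _ ⟨x', hx', rfl⟩ hne a (ha : ChainIn A r x a) b (hb : ChainIn A r x' b)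
  by_contra! hab
  have hxx' : ChainIn A r x x' := (ha.trans (.single (ha.mem hx) (hb.mem hx') hab)).trans hb.symm
  exact hne (ext fun z => ⟨hxx'.symm.trans, hxx'.trans⟩)

theorem asdimLE_iff_forall_dimLEAtScale {n : ℕ} :
    ASDimLE Y n ↔ ∀ r, ∃ D, DimLEAtScale (univ : Set Y) n r D := by
  constructor
  · intro h r
    obtain ⟨𝒰, hbdd, hdisj, hcover⟩ := h (r + 1) (by positivity)
    choose S hS using hbdd
    refine ⟨∑ i, (S i).toNNReal, fun i => ⋃₀ 𝒰 i, fun y _ => mem_iUnion.2 (hcover y), fun i => ?_⟩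
    refine .sUnion (fun U hU x hx y hy => ?_)
      fun U hU V hV hUV x hx y hy => by linarith [hdisj i U hU V hV hUV x hx y hy]
    calc dist x y ≤ S i := hS i U hU x hx y hy
      _ ≤ (S i).toNNReal := Real.le_coe_toNNReal _
      _ ≤ ∑ i, (S i).toNNReal := NNReal.coe_le_coe.2 <|
        Finset.single_le_sum (f := fun i => (S i).toNNReal) (fun _ _ => zero_le) (Finset.mem_univ i)
  · intro h R hR
    lift R to ℝ≥0 using hR.le
    obtain ⟨D, A, hcover, hA⟩ := h R
    refine ⟨fun i => chainComponents (A i) R, fun i => ⟨D, ?_⟩,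
      fun i => rDisjointFam_chainComponents _ _, fun x => ?_⟩
    · rintro _ ⟨x, -, rfl⟩ a (ha : ChainIn _ _ x a) b (hb : ChainIn _ _ x b)
      exact hA i (ha.symm.trans hb)
    · obtain ⟨i, hi⟩ := mem_iUnion.1 (hcover (mem_univ x))
      exact ⟨i, _, mem_image_of_mem _ hi, .refl x⟩

theorem ChainIn.mem_nbhdR {A B : Set X} {t : ℝ≥0} {ρ : ℝ} {x y : X} (h : ChainIn B t x y)
    (hB : ∀ z ∈ B, z ∈ NbhdR A (ρ + t) → z ∈ NbhdR A ρ) (hx : x ∈ NbhdR A ρ) :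
    y ∈ NbhdR A ρ := by
  induction h with
  | refl => exact hx
  | @tail z w _ hstep ih =>
    obtain ⟨a, ha, hza⟩ := ih
    exact hB w hstep.2.1 ⟨a, ha, by linarith [dist_triangle_left w a z, hstep.2.2]⟩

theorem ASDimLE.of_coarselyFiniteTo1 {f : X → Y} {n : ℕ} (hY : ASDimLE Y n)
    (hf : ∀ R > (0 : ℝ), ∃ S > (0 : ℝ), ∀ x x', dist x x' ≤ R → dist (f x) (f x') ≤ S)
    (hfin : CoarselyFiniteTo1 f) : ASDimLE X n := by
  rw [asdimLE_iff_forall_dimLEAtScale] at hY ⊢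
  intro r
  obtain ⟨s, hs, hfs⟩ := hf (r + 1) (by positivity)
  lift s to ℝ≥0 using hs.le
  obtain ⟨D, A, hcover, hA⟩ := hY s
  obtain ⟨S, hS, m, hfiber⟩ := hfin (D + 1) (by positivity)
  lift S to ℝ≥0 using hS.le
  obtain ⟨F, _, hF⟩ := DimLEAtScale.exists_iUnion (Y := X) (Fin m) 0 (fun _ => S) r
  refine ⟨F, fun i => f ⁻¹' A i, fun x _ => by simpa using hcover (mem_univ (f x)),
    fun i x y hxy => ?_⟩
  have hchain : ∀ {a b}, ChainIn (f ⁻¹' A i) r a b → ChainIn (A i) s (f a) (f b) := fun h =>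
    h.map (mapsTo_preimage f _) fun a _ b _ hab => hfs a b (by linarith)
  let C : Set X := {z | ChainIn (f ⁻¹' A i) r x z}
  have hfC : ∀ p ∈ f '' C, ∀ p' ∈ f '' C, dist p p' ≤ D + 1 := by
    rintro _ ⟨a, ha : ChainIn _ _ x a, rfl⟩ _ ⟨b, hb : ChainIn _ _ x b, rfl⟩
    linarith [hA i (hchain (ha.symm.trans hb))]
  obtain ⟨V, hV, hCV⟩ := hfiber (f '' C) hfC
  have hV_union : ChainBounded (⋃ k, V k) r F := dimLEAtScale_zero_iff.1 <|
    hF V fun k _ _ => dimLEAtScale_zero_iff.2 (.of_forall_dist_le (hV k))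
  exact hV_union (hxy.of_forall_mem fun z _ hxz => hCV ⟨z, hxz, rfl⟩)

theorem asdim_congr (h : ∀ n, ASDimLE X n ↔ ASDimLE Y n) : asdim X = asdim Y := by
  simp only [asdim, h]

end AsymptoticDimension

theorem exists_succ_subset_of_monotone {α : Type*} [Finite α] {S : ℕ → Set α} (hS : Monotone S) :
    ∃ k ≤ Nat.card α, S (k + 1) ⊆ S k := by
  by_contra! hgrow
  have hcard : ∀ k ≤ Nat.card α + 1, k ≤ (S k).ncard := by
    intro k hk
    induction k with
    | zero => exact Nat.zero_le _
    | succ k ih =>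
      have hlt : (S k).ncard < (S (k + 1)).ncard :=
        ncard_lt_ncard ⟨hS k.le_succ, hgrow k (by lia)⟩
      have := ih (by lia)
      lia
  have := hcard _ le_rfl
  have := ncard_le_card (S (Nat.card α + 1))
  lia

section QuotientMaps

variable {X : Type*} [PseudoMetricSpace X] {G : Type*} [Group G] [MulAction G X]
  {Q : Type*} [MetricSpace Q] {q : X → Q}

/-- The map `q : X → Q` identifies the metric space `Q` with the orbit space `G\X` equipped with
the minimal distance between orbits; for isometric actions of finite groups, this is the Hausdorff
distance. -/
structure IsMetricQuotient (G : Type*) [Group G] [MulAction G X] (q : X → Q) : Prop where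
  surjective : Surjective q
  isLeast_dist : ∀ x y, IsLeast (range fun g : G => dist x (g • y)) (dist (q x) (q y))

theorem isLeast_hausdorffDist_orbit [Finite G] [IsIsometricSMul G X] (x y : X) :
    IsLeast (range fun g : G => dist x (g • y))
      (hausdorffDist (MulAction.orbit G x) (MulAction.orbit G y)) := by
  have hfin : ∀ z : X, (MulAction.orbit G z).Finite := fun z => finite_range _
  have hle : ∀ g : G, hausdorffDist (MulAction.orbit G x) (MulAction.orbit G y) ≤
      dist x (g • y) := by
    refine fun g => hausdorffDist_le_of_mem_dist dist_nonneg ?_ ?_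
    · rintro _ ⟨h, rfl⟩
      exact ⟨h • g • y, ⟨h * g, mul_smul h g y⟩, (dist_smul h x (g • y)).le⟩
    · rintro _ ⟨h, rfl⟩
      refine ⟨(h * g⁻¹) • x, MulAction.mem_orbit x _, ?_⟩
      calc dist (h • y) ((h * g⁻¹) • x) = dist ((h * g⁻¹) • g • y) ((h * g⁻¹) • x) := by
            simp [smul_smul]
        _ ≤ dist x (g • y) := by rw [dist_smul, dist_comm]
  obtain ⟨_, ⟨g, rfl⟩, hg⟩ :=
    (hfin y).isCompact.exists_infDist_eq_dist (MulAction.nonempty_orbit y) x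
  have hge : dist x (g • y) ≤ hausdorffDist (MulAction.orbit G x) (MulAction.orbit G y) :=
    hg.ge.trans <| infDist_le_hausdorffDist_of_mem (MulAction.mem_orbit_self x) <|
      hausdorffEDist_ne_top_of_nonempty_of_bounded (MulAction.nonempty_orbit x)
        (MulAction.nonempty_orbit y) (hfin x).isBounded (hfin y).isBounded
  exact ⟨⟨g, hge.antisymm (hle g)⟩, forall_mem_range.2 hle⟩

/-- The group elements moving `x` by more than `s`; where this set does not change with `s` over a
long interval, the quotient map is controlled by a local section. -/
def displacers (G : Type*) [Group G] [MulAction G X] (x : X) (s : ℝ≥0) : Set G :=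
  {g | s < dist x (g • x)}

theorem mem_displacers {g : G} {x : X} {s : ℝ≥0} :
    g ∈ displacers G x s ↔ s < dist x (g • x) := Iff.rfl

theorem displacers_antitone (x : X) : Antitone (displacers G x) :=
  fun _ _ hst _ hg => (NNReal.coe_le_coe.2 hst).trans_lt hg

theorem displacers_smul [IsIsometricSMul G X] (h : G) (x : X) (s : ℝ≥0) :
    displacers G (h • x) s = MulAut.conj h '' displacers G x s := by
  ext g
  have hdist : dist x ((h⁻¹ * g * h) • x) = dist (h • x) (g • h • x) := by
    rw [← dist_smul h x]
    simp [smul_smul, mul_assoc]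
  rw [← MulEquiv.coe_toEquiv, mem_image_equiv]
  change _ ↔ h⁻¹ * g * h ∈ displacers G x s
  rw [mem_displacers, mem_displacers, hdist]

namespace IsMetricQuotient

theorem dist_map_le (hq : IsMetricQuotient G q) (x y : X) : dist (q x) (q y) ≤ dist x y :=
  (hq.isLeast_dist x y).2 ⟨1, by simp⟩

theorem map_smul (hq : IsMetricQuotient G q) (g : G) (x : X) : q (g • x) = q x :=
  dist_le_zero.1 ((hq.isLeast_dist (g • x) x).2 ⟨g, dist_self _⟩)

theorem exists_map_eq_dist_eq (hq : IsMetricQuotient G q) (x : X) (p : Q) :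
    ∃ y, q y = p ∧ dist x y = dist (q x) p := by
  obtain ⟨y, rfl⟩ := hq.surjective p
  obtain ⟨g, hg⟩ := (hq.isLeast_dist x y).1
  exact ⟨g • y, hq.map_smul g y, hg⟩

theorem exists_chainIn_preimage (hq : IsMetricQuotient G q) {P : Set Q} {r : ℝ≥0} {x : X} {p : Q}
    (h : ChainIn P r (q x) p) : ∃ y, q y = p ∧ ChainIn (q ⁻¹' P) r x y := by
  induction h with
  | refl => exact ⟨x, rfl, .refl x⟩
  | @tail _ p' _ hstep ih =>
    obtain ⟨y, rfl, hxy⟩ := ih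
    obtain ⟨z, rfl, hyz⟩ := hq.exists_map_eq_dist_eq y p'
    exact ⟨z, rfl, hxy.trans (.single hstep.1 hstep.2.1 (hyz.trans_le hstep.2.2))⟩

theorem exists_section_of_chainBounded (hq : IsMetricQuotient G q) {P : Set Q} {L E : ℝ≥0}
    (hP : ChainBounded P L E) :
    ∃ σ : Q → X, (∀ p, q (σ p) = p) ∧
      ∀ p p', ChainIn P L p p' → dist (σ p) (σ p') ≤ 2 * E := by
  let S : Setoid Q := ⟨ChainIn P L, .refl, .symm, .trans⟩
  choose center hcenter using fun c : Quotient S => hq.surjective c.out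
  choose σ hσ hdist using fun p => hq.exists_map_eq_dist_eq (center (Quotient.mk S p)) p
  have hσ_near : ∀ p, dist (center (Quotient.mk S p)) (σ p) ≤ E := fun p => by
    rw [hdist, hcenter]
    exact hP (Quotient.mk_out (s := S) p)
  refine ⟨σ, hσ, fun p p' hpp' => ?_⟩
  have hcomponent : Quotient.mk S p = Quotient.mk S p' := Quotient.sound hpp'
  linarith [dist_triangle_left (σ p) (σ p') (center (Quotient.mk S p)), hσ_near p,
    hcomponent ▸ hσ_near p']

theorem dimLEAtScale_of_displacers_subset (hq : IsMetricQuotient G q) {n : ℕ} {P : Set Q}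
    {L E s t D : ℝ≥0} (hX : DimLEAtScale (univ : Set X) n (t + s) D) (hP : ChainBounded P L E)
    (hgap : ∀ x, q x ∈ P → displacers G x s ⊆ displacers G x (L + 2 * E)) (htL : t ≤ L) :
    DimLEAtScale P n t D := by
  obtain ⟨σ, hσ, hσ_dist⟩ := hq.exists_section_of_chainBounded hP
  -- If `dist p p' ≤ t`, then the `g` realizing this distance moves `σ p'` by at most `t + 2 * E`,
  -- hence, by the gap in the displacements, by at most `s`.
  refine hX.comap (f := σ) (mapsTo_univ _ _) (fun p hp p' hp' hpp' => ?_) fun p p' => ?_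
  · have htL' : (t : ℝ) ≤ L := NNReal.coe_le_coe.2 htL
    have hclose : dist (σ p) (σ p') ≤ 2 * E := hσ_dist p p' (.single hp hp' (hpp'.trans htL'))
    obtain ⟨g, hg : dist (σ p) (g • σ p') = _⟩ := (hq.isLeast_dist (σ p) (σ p')).1
    rw [hσ, hσ] at hg
    have hmove : dist (σ p') (g • σ p') ≤ s := by
      by_contra! hg_displaces
      have hfar := mem_displacers.1 (hgap (σ p') (by rwa [hσ]) (mem_displacers.2 hg_displaces))
      push_cast at hfar
      linarith [dist_triangle_left (σ p') (g • σ p') (σ p)]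
    push_cast
    linarith [dist_triangle_right (σ p) (σ p') (g • σ p')]
  · simpa only [hσ] using hq.dist_map_le (σ p) (σ p')

end IsMetricQuotient

end QuotientMaps

section Quotients

variable {X : Type*} [MetricSpace X] {G : Type*} [Group G] [MulAction G X]
  {Q : Type*} [MetricSpace Q] {q : X → Q}

namespace IsMetricQuotient

theorem exists_smul_eq (hq : IsMetricQuotient G q) {x y : X} (hxy : q x = q y) :
    ∃ g : G, g • x = y := by
  obtain ⟨g, hg⟩ := (hq.isLeast_dist y x).1
  exact ⟨g, (dist_eq_zero.1 (hg.trans (by rw [hxy, dist_self]))).symm⟩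

theorem coarselyFiniteTo1 [Finite G] (hq : IsMetricQuotient G q) : CoarselyFiniteTo1 q := by
  intro R hR
  refine ⟨2 * R, by positivity, Nat.card G, fun A hA => ?_⟩
  rcases (q ⁻¹' A).eq_empty_or_nonempty with hempty | ⟨x, hx⟩
  · exact ⟨fun _ => ∅, by simp, by simp [hempty]⟩
  refine ⟨fun k => closedBall ((Finite.equivFin G).symm k • x) R, fun k a ha b hb => ?_,
    fun y hy => ?_⟩
  · linarith [dist_triangle_right a b ((Finite.equivFin G).symm k • x), mem_closedBall.1 ha,
      mem_closedBall.1 hb]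
  · obtain ⟨g, hg⟩ := (hq.isLeast_dist y x).1
    exact mem_iUnion.2 ⟨Finite.equivFin G g, by
      simpa using hg.trans_le (hA _ hy _ hx)⟩

theorem asdimLE_of_asdimLE_quotient [Finite G] (hq : IsMetricQuotient G q) {n : ℕ}
    (hQ : ASDimLE Q n) : ASDimLE X n :=
  hQ.of_coarselyFiniteTo1 (fun R hR => ⟨R, hR, fun x y => (hq.dist_map_le x y).trans⟩)
    hq.coarselyFiniteTo1

theorem asdimLE_quotient_card [Finite G] (hq : IsMetricQuotient G q) {n : ℕ} (hX : ASDimLE X n) :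
    ASDimLE Q (Nat.card (G × Fin (n + 1))) := by
  rw [asdimLE_iff_forall_dimLEAtScale] at hX ⊢
  intro t
  set N := Nat.card (G × Fin (n + 1))
  obtain ⟨D, A, hcover, hA⟩ := hX (t + 2 * (N * t))
  -- The `k`-th colour: no lift lies in a shell between the radii `k * t` and `k * t + t` around
  -- some `A i`, so that `t`-chains cannot leave the `k * t`-neighbourhood of `A i`.
  let colour : Fin (N + 1) → Set Q := fun k =>
    {p | ∀ x, q x = p → ∀ i, x ∈ NbhdR (A i) (k * t + t) → x ∈ NbhdR (A i) (k * t)}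
  refine ⟨D + 2 * (N * t), colour, fun p _ => ?_, fun k p p' hpp' => ?_⟩
  · obtain ⟨x, rfl⟩ := hq.surjective p
    have hmono : Monotone fun k : ℕ =>
        {gi : G × Fin (n + 1) | gi.1 • x ∈ NbhdR (A gi.2) (k * t)} :=
      fun k l hkl gi ⟨a, ha, hdist⟩ => ⟨a, ha, hdist.trans (by gcongr)⟩
    obtain ⟨k, hk, hgap⟩ := exists_succ_subset_of_monotone hmono
    refine mem_iUnion.2 ⟨⟨k, Nat.lt_succ_of_le hk⟩, fun y hy i hyi => ?_⟩
    obtain ⟨g, rfl⟩ := hq.exists_smul_eq hy.symm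
    exact hgap (a := (g, i)) (by simpa [add_one_mul] using hyi)
  · obtain ⟨x, rfl⟩ := hq.surjective p
    obtain ⟨i, hi⟩ := mem_iUnion.1 (hcover (mem_univ x))
    obtain ⟨y, rfl, hxy⟩ := hq.exists_chainIn_preimage hpp'
    have hx : x ∈ NbhdR (A i) (k * t) := ⟨x, hi, by rw [dist_self]; positivity⟩
    have hbdd : ChainBounded (NbhdR (A i) (k * t)) t (D + 2 * (N * t)) :=
      (hA i).of_forall_exists_dist_le fun z ⟨a, ha, hza⟩ => ⟨a, ha, hza.trans (by
        push_cast
        gcongr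
        exact Nat.le_of_lt_succ k.2)⟩
    exact (hq.dist_map_le x y).trans <| hbdd <| hxy.of_forall_mem fun z _ hxz =>
      hxz.mem_nbhdR (fun w hw => hw w rfl i) hx

theorem exists_dimLEAtScale_of_displacers_subset [Finite G] (hq : IsMetricQuotient G q) {n : ℕ}
    (hX : ASDimLE X n) (r s : ℝ≥0) :
    ∃ F c : ℝ≥0, ∀ P : Set Q,
      (∀ x, q x ∈ P → displacers G x s ⊆ displacers G x (s + c)) → DimLEAtScale P n r F := by
  choose D hD using asdimLE_iff_forall_dimLEAtScale.1 hX
  obtain ⟨F, L, hF⟩ := DimLEAtScale.exists_iUnion (Y := Q)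
    (Fin (Nat.card (G × Fin (n + 1)) + 1)) n (fun t => D (t + s)) r
  obtain ⟨E, Z, hcover, hZ⟩ :=
    asdimLE_iff_forall_dimLEAtScale.1 (hq.asdimLE_quotient_card hX) L
  refine ⟨F, L + 2 * E, fun P hP => (hF (fun k => P ∩ Z k) fun k t ht => ?_).mono ?_ le_rfl⟩
  · exact hq.dimLEAtScale_of_displacers_subset (hD (t + s))
      ((hZ k).mono inter_subset_right le_rfl)
      (fun x hx => (hP x hx.1).trans (displacers_antitone x le_add_self)) ht
  · rw [← inter_iUnion]
    exact subset_inter subset_rfl ((subset_univ P).trans hcover)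

theorem exists_dimLEAtScale_ncard_displacers_lt [Finite G] [IsIsometricSMul G X]
    (hq : IsMetricQuotient G q) {n : ℕ} (hX : ASDimLE X n) (m : ℕ) (r s : ℝ≥0) :
    ∃ F, DimLEAtScale (q '' {x | (displacers G x s).ncard < m}) n r F := by
  induction m generalizing r s with
  | zero => exact ⟨0, by simpa using DimLEAtScale.empty⟩
  | succ m ih =>
    obtain ⟨F, c, hF⟩ := hq.exists_dimLEAtScale_of_displacers_subset hX r s
    obtain ⟨F', hF'⟩ := ih (r + 2 * (F + r)) (s + c)
    have hgap : DimLEAtScale (q '' {x | displacers G x s ⊆ displacers G x (s + c)}) n r F := by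
      refine hF _ fun y ⟨x, hx, hxy⟩ => ?_
      obtain ⟨h, rfl⟩ := hq.exists_smul_eq hxy
      simpa only [displacers_smul] using image_mono hx
    refine ⟨F' + 2 * (F + r), (hgap.union hF').mono ?_ le_rfl⟩
    rw [← image_union]
    refine image_mono fun x (hx : _ < m + 1) => or_iff_not_imp_right.2 fun hx' => ?_
    have hcard : (displacers G x s).ncard ≤ (displacers G x (s + c)).ncard :=
      (Nat.le_of_lt_succ hx).trans (not_lt.1 hx')
    exact (eq_of_subset_of_ncard_le (displacers_antitone x le_self_add) hcard).ge

theorem asdimLE_quotient [Finite G] [IsIsometricSMul G X] (hq : IsMetricQuotient G q) {n : ℕ}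
    (hX : ASDimLE X n) : ASDimLE Q n := by
  refine asdimLE_iff_forall_dimLEAtScale.2 fun r => ?_
  obtain ⟨F, hF⟩ := hq.exists_dimLEAtScale_ncard_displacers_lt hX (Nat.card G + 1) r 0
  refine ⟨F, hF.mono (fun p _ => ?_) le_rfl⟩
  obtain ⟨x, rfl⟩ := hq.surjective p
  exact mem_image_of_mem q (Nat.lt_succ_of_le (ncard_le_card _))

end IsMetricQuotient

end Quotients

theorem asdim_orbitSpace_eq_general {X : Type*} [MetricSpace X]
    (G : Type*) [Group G] [Finite G] [MulAction G X] [IsIsometricSMul G X]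
    (Q : Type*) [MetricSpace Q] (q : X → Q) (hsurj : Surjective q)
    (hdist : ∀ x y : X,
      dist (q x) (q y) = hausdorffDist (MulAction.orbit G x) (MulAction.orbit G y)) :
    asdim Q = asdim X := by
  have hq : IsMetricQuotient G q :=
    ⟨hsurj, fun x y => hdist x y ▸ isLeast_hausdorffDist_orbit x y⟩
  exact asdim_congr fun n => ⟨hq.asdimLE_of_asdimLE_quotient, hq.asdimLE_quotient⟩

/-- If a finite group `G` acts by isometries on a proper metric
space `X`, then the orbit space `G\X` (a metric space `Q` whose points are in
bijection with the orbits, with the Hausdorff distance between orbits) has the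
same asymptotic dimension as `X`. -/
theorem asdim_orbitSpace_eq {X : Type*} [MetricSpace X] [ProperSpace X]
    (G : Type*) [Group G] [Finite G] [MulAction G X]
    (hiso : ∀ g : G, Isometry fun x : X => g • x)
    (Q : Type*) [MetricSpace Q] (q : X → Q)
    (hsurj : Function.Surjective q)
    (hq : ∀ x y : X, q x = q y ↔ MulAction.orbit G x = MulAction.orbit G y)
    (hdist : ∀ x y : X,
      dist (q x) (q y) = hausdorffDist (MulAction.orbit G x) (MulAction.orbit G y)) :
    asdim Q = asdim X := by
  have : IsIsometricSMul G X := ⟨hiso⟩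
  exact asdim_orbitSpace_eq_general G Q q hsurj hdist
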